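/- arXiv:2503.01663 — 3 statements merged into one kernel-verified Lean document; each statement's English description precedes it below -/
import Mathlib

section
/- Let H = {1,…,m} and L = {1,…,n} be finite sets, let Π = (π₁,…,π_m) and Π′ = (π′₁,…,π′_m) be tuples of partitions of L, let p = (p₁,…,p_m) ∈ [0,1]^m, and let F = (f₁,…,f_n) be an aligned tuple of nonnegative real-valued functions on the power set of H. If Π′ is coarser than Π, then E(Π′,p,F) ≥ E(Π,p,F). -/
open Finset

/-- Weight of a block `M` of a partition relative to a turnout set `S`. -/
def blockWeight {n : ℕ} (p : ℝ) (M S : Finset (Fin n)) : ℝ :=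
  if M ⊆ S then p else if M ∩ S = ∅ then 1 - p else 0

/-- The measure `μ_{π,p}` on subsets of `L = Fin n`. -/
def partMeasure {n : ℕ} (pt : Finpartition (univ : Finset (Fin n))) (p : ℝ)
    (S : Finset (Fin n)) : ℝ :=
  ∏ M ∈ pt.parts, blockWeight p M S

/-- `L_h(T) = {l : (h,l) ∈ T}`. -/
def Lh {m n : ℕ} (h : Fin m) (T : Finset (Fin m × Fin n)) : Finset (Fin n) :=
  univ.filter fun l => (h, l) ∈ T

/-- `H_l(T) = {h : (h,l) ∈ T}`. -/
def Hl {m n : ℕ} (l : Fin n) (T : Finset (Fin m × Fin n)) : Finset (Fin m) :=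
  univ.filter fun h => (h, l) ∈ T

/-- The measure `μ_{Π,p}` on subsets of `H × L`. -/
def schedMeasure {m n : ℕ} (Sch : Fin m → Finpartition (univ : Finset (Fin n)))
    (p : Fin m → ℝ) (T : Finset (Fin m × Fin n)) : ℝ :=
  ∏ h, partMeasure (Sch h) (p h) (Lh h T)

/-- `E(Π, p, F)`. -/
def schedExp {m n : ℕ} (Sch : Fin m → Finpartition (univ : Finset (Fin n)))
    (p : Fin m → ℝ) (F : Fin n → Finset (Fin m) → ℝ) : ℝ :=
  ∑ T : Finset (Fin m × Fin n), (∏ l, F l (Hl l T)) * schedMeasure Sch p T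

def IncreasingAt {m : ℕ} (f : Finset (Fin m) → ℝ) (h : Fin m) : Prop :=
  ∀ S : Finset (Fin m), f S ≤ f (insert h S)

def DecreasingAt {m : ℕ} (f : Finset (Fin m) → ℝ) (h : Fin m) : Prop :=
  ∀ S : Finset (Fin m), f (insert h S) ≤ f S

def Aligned {m n : ℕ} (F : Fin n → Finset (Fin m) → ℝ) : Prop :=
  ∀ h : Fin m, (∀ l, IncreasingAt (F l) h) ∨ (∀ l, DecreasingAt (F l) h)

/-- `Sch'` is coarser than `Sch`. -/
def Coarser {m n : ℕ} (Sch' Sch : Fin m → Finpartition (univ : Finset (Fin n))) : Prop :=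
  ∀ h, ∀ M ∈ (Sch h).parts, ∃ M' ∈ (Sch' h).parts, M ⊆ M'

/-- Product Bernoulli measure on subsets of `H = Fin m`. -/
def bern {m : ℕ} (p : Fin m → ℝ) (S : Finset (Fin m)) : ℝ :=
  (∏ h ∈ S, p h) * ∏ h ∈ Sᶜ, (1 - p h)

/-- Expectation with respect to the product Bernoulli measure. -/
def bernExp {m : ℕ} (p : Fin m → ℝ) (f : Finset (Fin m) → ℝ) : ℝ :=
  ∑ S : Finset (Fin m), f S * bern p S

/-! For a partition `π` of `L`, the blocks are independent and `M ∩ S` is `M` or `∅`, so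
`∑ S, ∏ l, (if l ∈ S then a l else b l) * μ_{π,p}(S)` is the product over `M ∈ π` of
`p * ∏ l ∈ M, a l + (1 - p) * ∏ l ∈ M, b l`. Merging blocks increases this product: by Harris'
inequality for a two-point space, nonnegative comonotone factors are positively correlated.
Freezing the turnout of all `k ≠ h`, the integrand of `E(Π, p, F)` has this form in the turnout
of `h`, so the partitions `π_h` can be replaced by `π'_h` one at a time. -/

section HarrisInequality

variable {ι R : Type*} [CommRing R] [PartialOrder R] [IsOrderedRing R]

lemma prod_mul_add_mul_le_of_le {s : Finset ι} {p q : R} (hp : 0 ≤ p) (hq : 0 ≤ q)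
    (hpq : p + q = 1) {a b : ι → R} (hb : ∀ i ∈ s, 0 ≤ b i) (hba : ∀ i ∈ s, b i ≤ a i) :
    ∏ i ∈ s, (p * a i + q * b i) ≤ p * ∏ i ∈ s, a i + q * ∏ i ∈ s, b i := by
  classical
  induction s using Finset.induction_on with
  | empty => simp [hpq]
  | insert i s hi ih =>
    obtain ⟨hbi, hbs⟩ := forall_mem_insert .. |>.1 hb
    obtain ⟨hbai, hbas⟩ := forall_mem_insert .. |>.1 hba
    simp only [prod_insert hi]
    set A := ∏ j ∈ s, a j
    set B := ∏ j ∈ s, b j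
    have hBA : B ≤ A := prod_le_prod hbs hbas
    have hmix : 0 ≤ p * a i + q * b i :=
      add_nonneg (mul_nonneg hp (hbi.trans hbai)) (mul_nonneg hq hbi)
    have hcov : 0 ≤ p * q * ((a i - b i) * (A - B)) :=
      mul_nonneg (mul_nonneg hp hq) (mul_nonneg (sub_nonneg.2 hbai) (sub_nonneg.2 hBA))
    calc (p * a i + q * b i) * ∏ j ∈ s, (p * a j + q * b j)
        ≤ (p * a i + q * b i) * (p * A + q * B) := mul_le_mul_of_nonneg_left (ih hbs hbas) hmix
      _ ≤ (p * a i + q * b i) * (p * A + q * B) + p * q * ((a i - b i) * (A - B)) :=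
        le_add_of_nonneg_right hcov
      _ = p * (a i * A) + q * (b i * B) := by
        obtain rfl : q = 1 - p := eq_sub_of_add_eq' hpq
        ring

lemma prod_mul_add_mul_le {s : Finset ι} {p q : R} (hp : 0 ≤ p) (hq : 0 ≤ q)
    (hpq : p + q = 1) {a b : ι → R} (ha : ∀ i ∈ s, 0 ≤ a i) (hb : ∀ i ∈ s, 0 ≤ b i)
    (hab : (∀ i ∈ s, b i ≤ a i) ∨ ∀ i ∈ s, a i ≤ b i) :
    ∏ i ∈ s, (p * a i + q * b i) ≤ p * ∏ i ∈ s, a i + q * ∏ i ∈ s, b i := by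
  rcases hab with hba | hab
  · exact prod_mul_add_mul_le_of_le hp hq hpq hb hba
  · simpa only [add_comm] using
      prod_mul_add_mul_le_of_le hq hp (by rwa [add_comm]) ha hab

end HarrisInequality

section Refinement

variable {α : Type*} [DecidableEq α] {s : Finset α} {P Q : Finpartition s}

lemma biUnion_parts_filter_subset (hPQ : P ≤ Q) {N : Finset α} (hN : N ∈ Q.parts) :
    (P.parts.filter (· ⊆ N)).biUnion id = N := by
  ext x
  simp only [mem_biUnion, mem_filter, id]
  refine ⟨fun ⟨M, hM, hx⟩ => hM.2 hx, fun hx => ?_⟩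
  obtain ⟨M, hM, hxM⟩ := P.exists_mem (Q.subset hN hx)
  obtain ⟨N', hN', hMN'⟩ := hPQ hM
  exact ⟨M, ⟨hM, Q.eq_of_mem_parts hN' hN (hMN' hxM) hx ▸ hMN'⟩, hxM⟩

lemma biUnion_parts_filter_subset_eq_parts (hPQ : P ≤ Q) :
    Q.parts.biUnion (fun N => P.parts.filter (· ⊆ N)) = P.parts := by
  ext M
  simp only [mem_biUnion, mem_filter]
  exact ⟨fun ⟨_, _, hM, _⟩ => hM, fun hM => (hPQ hM).imp fun N h => ⟨h.1, hM, h.2⟩⟩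

lemma pairwiseDisjoint_parts_filter_subset (P Q : Finpartition s) :
    (Q.parts : Set (Finset α)).PairwiseDisjoint fun N => P.parts.filter (· ⊆ N) := by
  refine fun N hN N' hN' hne => disjoint_left.2 fun M hM hM' => hne ?_
  rw [mem_filter] at hM hM'
  obtain ⟨x, hx⟩ := P.nonempty_of_mem_parts hM.1
  exact Q.eq_of_mem_parts hN hN' (hM.2 hx) (hM'.2 hx)

lemma prod_parts_filter_subset {R : Type*} [CommMonoid R] (hPQ : P ≤ Q) {N : Finset α}
    (hN : N ∈ Q.parts) (f : α → R) :
    ∏ M ∈ P.parts with M ⊆ N, ∏ l ∈ M, f l = ∏ l ∈ N, f l := by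
  conv_rhs => rw [← biUnion_parts_filter_subset hPQ hN]
  exact (prod_biUnion (P.disjoint.subset (coe_subset.2 (filter_subset _ _)))).symm

lemma prod_parts_mul_add_mul_le_of_le {R : Type*} [CommRing R] [PartialOrder R] [IsOrderedRing R]
    (hPQ : P ≤ Q) {p q : R} (hp : 0 ≤ p) (hq : 0 ≤ q) (hpq : p + q = 1) {a b : α → R}
    (ha : ∀ l ∈ s, 0 ≤ a l) (hb : ∀ l ∈ s, 0 ≤ b l)
    (hab : ∀ N ∈ Q.parts, (∀ l ∈ N, b l ≤ a l) ∨ ∀ l ∈ N, a l ≤ b l) :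
    ∏ M ∈ P.parts, (p * ∏ l ∈ M, a l + q * ∏ l ∈ M, b l) ≤
      ∏ N ∈ Q.parts, (p * ∏ l ∈ N, a l + q * ∏ l ∈ N, b l) := by
  have hprod {c : α → R} (hc : ∀ l ∈ s, 0 ≤ c l) {M : Finset α} (hM : M ∈ P.parts) :
      0 ≤ ∏ l ∈ M, c l := prod_nonneg fun l hl => hc l (P.subset hM hl)
  rw [← biUnion_parts_filter_subset_eq_parts hPQ,
    prod_biUnion (pairwiseDisjoint_parts_filter_subset P Q)]
  refine prod_le_prod (fun N _ => prod_nonneg fun M hM => ?_) fun N hN => ?_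
  · have hM := (mem_filter.1 hM).1
    exact add_nonneg (mul_nonneg hp (hprod ha hM)) (mul_nonneg hq (hprod hb hM))
  rw [← prod_parts_filter_subset hPQ hN a, ← prod_parts_filter_subset hPQ hN b]
  refine prod_mul_add_mul_le hp hq hpq (fun M hM => hprod ha (mem_filter.1 hM).1)
    (fun M hM => hprod hb (mem_filter.1 hM).1) ((hab N hN).imp ?_ ?_)
  all_goals
    intro h M hM
    obtain ⟨hM, hMN⟩ := mem_filter.1 hM
    refine prod_le_prod (fun l hl => ?_) fun l hl => h l (hMN hl)
  · exact hb l (P.subset hM hl)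
  · exact ha l (P.subset hM hl)

end Refinement

section BlockIndependence

variable {ι α R : Type*} [DecidableEq α] [CommSemiring R]

lemma sum_powerset_union_mul {s t : Finset α} (hst : Disjoint s t) (f g : Finset α → R) :
    ∑ S ∈ (s ∪ t).powerset, f (S ∩ s) * g (S ∩ t) =
      (∑ U ∈ s.powerset, f U) * ∑ V ∈ t.powerset, g V := by
  rw [sum_mul_sum, ← sum_product']
  refine sum_nbij' (fun S => (S ∩ s, S ∩ t)) (fun x => x.1 ∪ x.2) ?_ ?_ ?_ ?_ fun _ _ => rfl
  · intro S _
    simp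
  · simp only [mem_product, mem_powerset]
    exact fun x hx => union_subset_union hx.1 hx.2
  · intro S hS
    rw [← inter_union_distrib_left, inter_eq_left.2 (mem_powerset.1 hS)]
  · rintro ⟨U, V⟩ hUV
    simp only [mem_product, mem_powerset] at hUV
    have hVs : V ∩ s = ∅ := disjoint_iff_inter_eq_empty.1 (hst.mono_right hUV.2).symm
    have hUt : U ∩ t = ∅ := disjoint_iff_inter_eq_empty.1 (hst.mono_left hUV.1)
    simp [union_inter_distrib_right, hVs, hUt, inter_eq_left.2 hUV.1, inter_eq_left.2 hUV.2]

lemma sum_powerset_biUnion_prod {I : Finset ι} {t : ι → Finset α}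
    (ht : (I : Set ι).PairwiseDisjoint t) (g : ι → Finset α → R) :
    ∑ S ∈ (I.biUnion t).powerset, ∏ i ∈ I, g i (S ∩ t i) =
      ∏ i ∈ I, ∑ U ∈ (t i).powerset, g i U := by
  classical
  induction I using Finset.induction_on with
  | empty => simp
  | insert j I hj ih =>
    rw [coe_insert, Set.pairwiseDisjoint_insert_of_notMem (mem_coe.not.2 hj)] at ht
    have hdisj : Disjoint (t j) (I.biUnion t) := (disjoint_biUnion_right ..).2 ht.2
    rw [biUnion_insert, prod_insert hj, ← ih ht.1, ← sum_powerset_union_mul hdisj]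
    refine sum_congr rfl fun S _ => ?_
    rw [prod_insert hj]
    congr 1
    refine prod_congr rfl fun i hi => ?_
    rw [inter_assoc, inter_eq_right.2 (subset_biUnion_of_mem t hi)]

end BlockIndependence

section PartMeasure

variable {n : ℕ}

lemma blockWeight_inter (p : ℝ) (M S : Finset (Fin n)) :
    blockWeight p M (S ∩ M) = blockWeight p M S := by
  simp [blockWeight, subset_inter_iff, inter_comm S M]

lemma sum_powerset_mul_blockWeight (p : ℝ) {M : Finset (Fin n)} (hM : M.Nonempty)
    (g : Finset (Fin n) → ℝ) :
    ∑ U ∈ M.powerset, g U * blockWeight p M U = p * g M + (1 - p) * g ∅ := by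
  rw [sum_eq_add_of_mem M ∅ (mem_powerset_self M) (empty_mem_powerset M) hM.ne_empty]
  · simp [blockWeight, hM.ne_empty, mul_comm]
  · rintro U hU ⟨hUM, hU0⟩
    have hUM' := mem_powerset.1 hU
    have hMU : ¬M ⊆ U := fun h => hUM (hUM'.antisymm h)
    simp [blockWeight, hMU, inter_eq_right.2 hUM', hU0]

variable (P : Finpartition (univ : Finset (Fin n)))

lemma partMeasure_nonneg {p : ℝ} (hp : 0 ≤ p ∧ p ≤ 1) (S : Finset (Fin n)) :
    0 ≤ partMeasure P p S := by
  refine prod_nonneg fun M _ => ?_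
  unfold blockWeight
  split_ifs
  exacts [hp.1, sub_nonneg.2 hp.2, le_rfl]

lemma sum_prod_parts_mul_partMeasure (p : ℝ) (g : Finset (Fin n) → Finset (Fin n) → ℝ) :
    ∑ S, (∏ M ∈ P.parts, g M (S ∩ M)) * partMeasure P p S =
      ∏ M ∈ P.parts, (p * g M M + (1 - p) * g M ∅) := by
  have hsum := sum_powerset_biUnion_prod P.disjoint fun M U => g M U * blockWeight p M U
  simp only [P.biUnion_parts, powerset_univ, id, blockWeight_inter, prod_mul_distrib] at hsum
  simp only [partMeasure, hsum]
  exact prod_congr rfl fun M hM => sum_powerset_mul_blockWeight p (P.nonempty_of_mem_parts hM) _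

lemma sum_prod_ite_mul_partMeasure (p : ℝ) (a b : Fin n → ℝ) :
    ∑ S, (∏ l, if l ∈ S then a l else b l) * partMeasure P p S =
      ∏ M ∈ P.parts, (p * ∏ l ∈ M, a l + (1 - p) * ∏ l ∈ M, b l) := by
  have hblocks (S : Finset (Fin n)) : (∏ l, if l ∈ S then a l else b l) =
      ∏ M ∈ P.parts, ∏ l ∈ M, if l ∈ S ∩ M then a l else b l := by
    conv_lhs => rw [← P.biUnion_parts, prod_biUnion P.disjoint]
    exact prod_congr rfl fun M _ => prod_congr rfl fun l hl => by simp [hl]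
  simp only [hblocks]
  rw [sum_prod_parts_mul_partMeasure P p fun M U => ∏ l ∈ M, if l ∈ U then a l else b l]
  refine prod_congr rfl fun M _ => ?_
  rw [prod_congr rfl fun l hl => if_pos hl]
  simp only [notMem_empty, if_false]

variable {P} {Q : Finpartition (univ : Finset (Fin n))}

lemma sum_prod_ite_mul_partMeasure_le_of_le (hPQ : P ≤ Q) {p : ℝ} (hp : 0 ≤ p ∧ p ≤ 1)
    {a b : Fin n → ℝ} (ha : ∀ l, 0 ≤ a l) (hb : ∀ l, 0 ≤ b l)
    (hab : ∀ N ∈ Q.parts, (∀ l ∈ N, b l ≤ a l) ∨ ∀ l ∈ N, a l ≤ b l) :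
    ∑ S, (∏ l, if l ∈ S then a l else b l) * partMeasure P p S ≤
      ∑ S, (∏ l, if l ∈ S then a l else b l) * partMeasure Q p S := by
  rw [sum_prod_ite_mul_partMeasure, sum_prod_ite_mul_partMeasure]
  exact prod_parts_mul_add_mul_le_of_le hPQ hp.1 (sub_nonneg.2 hp.2) (add_sub_cancel p 1)
    (fun l _ => ha l) (fun l _ => hb l) hab

end PartMeasure

section CoordinatewiseReplacement

variable {ι R : Type*} {α : ι → Type*} [DecidableEq ι]

lemma piSplitAt_symm_eq_update (j : ι) (x y : α j) (r : ∀ i : {i // i ≠ j}, α i) :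
    (Equiv.piSplitAt j α).symm (x, r) =
      Function.update ((Equiv.piSplitAt j α).symm (y, r)) j x := by
  ext i
  by_cases hi : i = j
  · subst hi
    simp [Equiv.piSplitAt]
  · simp [Equiv.piSplitAt, hi]

variable [Fintype ι] [∀ i, Fintype (α i)] [CommSemiring R]

lemma sum_mul_prod_eq_sum_piSplitAt (Φ : (∀ i, α i) → R) (w : ∀ i, α i → R) (j : ι) :
    ∑ t, Φ t * ∏ i, w i (t i) = ∑ r : ∀ i : {i // i ≠ j}, α i,
      (∑ x, Φ ((Equiv.piSplitAt j α).symm (x, r)) * w j x) * ∏ i : {i // i ≠ j}, w i (r i) := by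
  rw [← (Equiv.piSplitAt j α).symm.sum_comp, Fintype.sum_prod_type_right]
  refine sum_congr rfl fun r _ => ?_
  rw [sum_mul]
  refine sum_congr rfl fun x _ => ?_
  rw [Fintype.prod_eq_mul_prod_subtype_ne _ j, ← mul_assoc]
  congr 1
  · simp [Equiv.piSplitAt]
  · exact prod_congr rfl fun i _ => by simp [Equiv.piSplitAt, i.2]

variable [PartialOrder R] [IsOrderedRing R]

lemma sum_mul_prod_le_sum_mul_prod_update {Φ : (∀ i, α i) → R} {w : ∀ i, α i → R} {j : ι}
    {v : α j → R} (hw : ∀ i ≠ j, ∀ x, 0 ≤ w i x)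
    (hwv : ∀ t, ∑ x, Φ (Function.update t j x) * w j x ≤ ∑ x, Φ (Function.update t j x) * v x) :
    ∑ t, Φ t * ∏ i, w i (t i) ≤ ∑ t, Φ t * ∏ i, Function.update w j v i (t i) := by
  rw [sum_mul_prod_eq_sum_piSplitAt Φ w j, sum_mul_prod_eq_sum_piSplitAt Φ _ j]
  refine sum_le_sum fun r _ => ?_
  have hothers : ∏ i : {i // i ≠ j}, Function.update w j v i (r i) =
      ∏ i : {i // i ≠ j}, w i (r i) :=
    prod_congr rfl fun i _ => by rw [Function.update_of_ne i.2]
  rw [hothers, Function.update_self]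
  refine mul_le_mul_of_nonneg_right ?_ (prod_nonneg fun i _ => hw i i.2 _)
  rcases isEmpty_or_nonempty (α j) with _ | ⟨⟨y⟩⟩
  · simp
  · simpa only [← piSplitAt_symm_eq_update] using hwv ((Equiv.piSplitAt j α).symm (y, r))

lemma sum_mul_prod_le_sum_mul_prod {Φ : (∀ i, α i) → R} {w v : ∀ i, α i → R}
    (hw : ∀ i x, 0 ≤ w i x) (hv : ∀ i x, 0 ≤ v i x)
    (hwv : ∀ i t, ∑ x, Φ (Function.update t i x) * w i x ≤
      ∑ x, Φ (Function.update t i x) * v i x) :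
    ∑ t, Φ t * ∏ i, w i (t i) ≤ ∑ t, Φ t * ∏ i, v i (t i) := by
  suffices h : ∀ s : Finset ι, ∑ t, Φ t * ∏ i, w i (t i) ≤
      ∑ t, Φ t * ∏ i, s.piecewise v w i (t i) by
    simpa only [piecewise_univ] using h univ
  intro s
  induction s using Finset.induction_on with
  | empty => simp
  | insert j s hj ih =>
    rw [piecewise_insert]
    refine ih.trans (sum_mul_prod_le_sum_mul_prod_update (fun i _ x => ?_) fun t => ?_)
    · by_cases hi : i ∈ s
      · simpa [hi] using hv i x
      · simpa [hi] using hw i x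
    · simpa [hj] using hwv j t

end CoordinatewiseReplacement

lemma insert_erase_eq_insert {α : Type*} [DecidableEq α] (s : Finset α) (a : α) :
    insert a (s.erase a) = insert a s := by
  grind

lemma filter_mem_update {ι α : Type*} [Fintype ι] [DecidableEq ι] [DecidableEq α]
    (t : ι → Finset α) (j : ι) (S : Finset α) (a : α) :
    ({i | a ∈ Function.update t j S i} : Finset ι) =
      if a ∈ S then insert j ({i | a ∈ t i} : Finset ι)
      else ({i | a ∈ t i} : Finset ι).erase j := by
  ext i
  by_cases hi : i = j <;> split_ifs with ha <;> simp [hi, ha]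

section Schedule

variable {m n : ℕ}

lemma IncreasingAt.erase_le_insert {f : Finset (Fin m) → ℝ} {h : Fin m} (hf : IncreasingAt f h)
    (S : Finset (Fin m)) : f (S.erase h) ≤ f (insert h S) := by
  simpa only [insert_erase_eq_insert] using hf (S.erase h)

lemma DecreasingAt.insert_le_erase {f : Finset (Fin m) → ℝ} {h : Fin m} (hf : DecreasingAt f h)
    (S : Finset (Fin m)) : f (insert h S) ≤ f (S.erase h) := by
  simpa only [insert_erase_eq_insert] using hf (S.erase h)

/-- The identification of a subset `T` of `H × L` with the family of its rows `L_h(T)`. -/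
def rowsEquiv (m n : ℕ) : Finset (Fin m × Fin n) ≃ (Fin m → Finset (Fin n)) where
  toFun T h := Lh h T
  invFun t := {x | x.2 ∈ t x.1}
  left_inv T := by ext; simp [Lh]
  right_inv t := by ext; simp [Lh]

lemma schedExp_eq_sum_rows (Sch : Fin m → Finpartition (univ : Finset (Fin n)))
    (p : Fin m → ℝ) (F : Fin n → Finset (Fin m) → ℝ) :
    schedExp Sch p F = ∑ t : Fin m → Finset (Fin n),
      (∏ l, F l {h | l ∈ t h}) * ∏ h, partMeasure (Sch h) (p h) (t h) := by
  rw [← (rowsEquiv m n).sum_comp]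
  simp [schedExp, schedMeasure, rowsEquiv, Hl, Lh]

theorem coarser_schedule_le_general (Sch Sch' : Fin m → Finpartition (univ : Finset (Fin n)))
    (p : Fin m → ℝ) (hp : ∀ h, 0 ≤ p h ∧ p h ≤ 1)
    (F : Fin n → Finset (Fin m) → ℝ) (hFnonneg : ∀ l S, 0 ≤ F l S)
    (hFaligned : ∀ h, ∀ N ∈ (Sch' h).parts,
      (∀ l ∈ N, IncreasingAt (F l) h) ∨ ∀ l ∈ N, DecreasingAt (F l) h)
    (hcoarser : Coarser Sch' Sch) :
    schedExp Sch p F ≤ schedExp Sch' p F := by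
  rw [schedExp_eq_sum_rows, schedExp_eq_sum_rows]
  refine sum_mul_prod_le_sum_mul_prod (w := fun h => partMeasure (Sch h) (p h))
    (v := fun h => partMeasure (Sch' h) (p h)) (fun h => partMeasure_nonneg _ (hp h))
    (fun h => partMeasure_nonneg _ (hp h)) fun h t => ?_
  simp only [filter_mem_update, apply_ite (F _)]
  exact sum_prod_ite_mul_partMeasure_le_of_le (hcoarser h) (hp h) (fun l => hFnonneg l _)
    (fun l => hFnonneg l _) fun N hN => (hFaligned h N hN).imp
      (fun hinc l hl => (hinc l hl).erase_le_insert _)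
      fun hdec l hl => (hdec l hl).insert_le_erase _

end Schedule

/-- Theorem D: a coarser staggered schedule increases the expectation of an
aligned tuple of nonnegative functions. -/
theorem coarser_schedule_le {m n : ℕ}
    (Sch Sch' : Fin m → Finpartition (univ : Finset (Fin n)))
    (p : Fin m → ℝ) (hp : ∀ h, 0 ≤ p h ∧ p h ≤ 1)
    (F : Fin n → Finset (Fin m) → ℝ)
    (hFnonneg : ∀ l S, 0 ≤ F l S) (hFaligned : Aligned F)
    (hcoarser : Coarser Sch' Sch) :
    schedExp Sch p F ≤ schedExp Sch' p F :=
  coarser_schedule_le_general Sch Sch' p hp F hFnonneg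
    (fun h _ _ => (hFaligned h).imp (fun hinc l _ => hinc l) fun hdec l _ => hdec l) hcoarser
end

section
/- Let H = {1,…,m} be a finite set, let p = (p₁,…,p_m) ∈ [0,1]^m, and let F = (f₁,…,f_n) be an aligned tuple of nonnegative real-valued functions on the power set of H. Then E(f₁·f₂⋯f_n, μ_p) ≥ E(f₁, μ_p)·E(f₂, μ_p)⋯E(f_n, μ_p), where μ_p is the product Bernoulli measure on subsets of H. -/
open Finset

/-!
Complementing the coordinates in a set `D` turns the Bernoulli measure with parameter `p` into the
one whose parameter is `1 - p` on `D` and `p` off `D`. With `D` the set of coordinates at which all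
functions of an aligned tuple are decreasing, this makes the whole tuple increasing. Nonnegative
increasing functions are closed under products, so the two-function FKG inequality applies
inductively; its lattice condition holds with equality for a product measure.
-/

open scoped symmDiff

lemma fkg_prod {α β ι : Type*} [DistribLattice α] [Fintype α] [CommSemiring β] [LinearOrder β]
    [IsStrictOrderedRing β] [ExistsAddOfLE β] {μ : α → β} {f : ι → α → β} (s : Finset ι)
    (hμ₀ : 0 ≤ μ) (hf₀ : ∀ i ∈ s, 0 ≤ f i) (hf : ∀ i ∈ s, Monotone (f i))
    (hμ : ∀ a b, μ a * μ b ≤ μ (a ⊓ b) * μ (a ⊔ b)) :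
    (∑ a, μ a) * ∏ i ∈ s, ∑ a, μ a * f i a ≤ (∑ a, μ a) ^ #s * ∑ a, μ a * ∏ i ∈ s, f i a := by
  classical
  induction s using Finset.induction_on with
  | empty => simp
  | insert j s hj ih =>
    obtain ⟨hfj₀, hfs₀⟩ := (forall_mem_insert _ _ _).1 hf₀
    obtain ⟨hfj, hfs⟩ := (forall_mem_insert _ _ _).1 hf
    have prod_fs_nonneg : 0 ≤ fun a ↦ ∏ i ∈ s, f i a := fun a ↦ prod_nonneg fun i hi ↦ hfs₀ i hi a
    have prod_fs_monotone : Monotone fun a ↦ ∏ i ∈ s, f i a := fun a b hab ↦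
      prod_le_prod (fun i hi ↦ hfs₀ i hi a) fun i hi ↦ hfs i hi hab
    have total_nonneg : 0 ≤ ∑ a, μ a := sum_nonneg fun a _ ↦ hμ₀ a
    have sum_fj_nonneg : 0 ≤ ∑ a, μ a * f j a := sum_nonneg fun a _ ↦ mul_nonneg (hμ₀ a) (hfj₀ a)
    simp only [prod_insert hj, card_insert_of_notMem hj]
    calc (∑ a, μ a) * ((∑ a, μ a * f j a) * ∏ i ∈ s, ∑ a, μ a * f i a)
        = (∑ a, μ a * f j a) * ((∑ a, μ a) * ∏ i ∈ s, ∑ a, μ a * f i a) := mul_left_comm ..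
      _ ≤ (∑ a, μ a * f j a) * ((∑ a, μ a) ^ #s * ∑ a, μ a * ∏ i ∈ s, f i a) :=
        mul_le_mul_of_nonneg_left (ih hfs₀ hfs) sum_fj_nonneg
      _ = (∑ a, μ a) ^ #s * ((∑ a, μ a * f j a) * ∑ a, μ a * ∏ i ∈ s, f i a) := mul_left_comm ..
      _ ≤ (∑ a, μ a) ^ #s * ((∑ a, μ a) * ∑ a, μ a * (f j a * ∏ i ∈ s, f i a)) :=
        mul_le_mul_of_nonneg_left (fkg _ _ _ hμ₀ hfj₀ prod_fs_nonneg hfj prod_fs_monotone hμ)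
          (pow_nonneg total_nonneg _)
      _ = (∑ a, μ a) ^ (#s + 1) * ∑ a, μ a * (f j a * ∏ i ∈ s, f i a) := by
        rw [pow_succ, mul_assoc]

section Bernoulli

variable {m : ℕ}

lemma bern_nonneg {p : Fin m → ℝ} (hp : ∀ h, 0 ≤ p h ∧ p h ≤ 1) (S : Finset (Fin m)) :
    0 ≤ bern p S :=
  mul_nonneg (prod_nonneg fun h _ ↦ (hp h).1) (prod_nonneg fun h _ ↦ sub_nonneg.2 (hp h).2)

lemma sum_bern (p : Fin m → ℝ) : ∑ S, bern p S = 1 := by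
  simpa [bern] using (Fintype.prod_add p (1 - p)).symm

lemma bern_eq_prod_piecewise (p : Fin m → ℝ) (S : Finset (Fin m)) :
    bern p S = ∏ h, S.piecewise p (1 - p) h := by
  simp [bern, prod_piecewise, compl_eq_univ_sdiff]

lemma bern_inf_mul_bern_sup (p : Fin m → ℝ) (S T : Finset (Fin m)) :
    bern p (S ⊓ T) * bern p (S ⊔ T) = bern p S * bern p T := by
  simp only [bern_eq_prod_piecewise, ← prod_mul_distrib]
  refine prod_congr rfl fun h _ ↦ ?_
  by_cases hS : h ∈ S <;> by_cases hT : h ∈ T <;> simp [piecewise, hS, hT, mul_comm]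

lemma bern_symmDiff (p : Fin m → ℝ) (S D : Finset (Fin m)) :
    bern p (S ∆ D) = bern (D.piecewise (1 - p) p) S := by
  simp only [bern_eq_prod_piecewise]
  refine prod_congr rfl fun h _ ↦ ?_
  by_cases hS : h ∈ S <;> by_cases hD : h ∈ D <;> simp [piecewise, mem_symmDiff, hS, hD]

lemma bernExp_comp_symmDiff (p : Fin m → ℝ) (f : Finset (Fin m) → ℝ) (D : Finset (Fin m)) :
    bernExp (D.piecewise (1 - p) p) (fun S ↦ f (S ∆ D)) = bernExp p f := by
  simp only [bernExp, ← bern_symmDiff]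
  exact (symmDiff_left_involutive D).bijective.sum_comp fun S ↦ f S * bern p S

lemma prod_bernExp_le_of_monotone {ι : Type*} {p : Fin m → ℝ} (hp : ∀ h, 0 ≤ p h ∧ p h ≤ 1)
    {f : ι → Finset (Fin m) → ℝ} (s : Finset ι) (hf₀ : ∀ i ∈ s, 0 ≤ f i)
    (hf : ∀ i ∈ s, Monotone (f i)) :
    ∏ i ∈ s, bernExp p (f i) ≤ bernExp p (fun S ↦ ∏ i ∈ s, f i S) := by
  simpa [sum_bern, bernExp, mul_comm] using
    fkg_prod s (bern_nonneg hp) hf₀ hf fun S T ↦ (bern_inf_mul_bern_sup p S T).ge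

lemma monotone_comp_symmDiff {f : Finset (Fin m) → ℝ} {D : Finset (Fin m)}
    (hdec : ∀ h ∈ D, DecreasingAt f h) (hinc : ∀ h ∉ D, IncreasingAt f h) :
    Monotone fun S ↦ f (S ∆ D) := by
  refine monotone_iff_forall_le_insert.2 fun S h hS ↦ ?_
  by_cases hD : h ∈ D
  · have insert_eq : insert h (insert h S ∆ D) = S ∆ D := by grind [mem_symmDiff]
    simpa only [insert_eq] using hdec h hD (insert h S ∆ D)
  · have insert_eq : insert h (S ∆ D) = insert h S ∆ D := by grind [mem_symmDiff]
    simpa only [insert_eq] using hinc h hD (S ∆ D)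

lemma Aligned.exists_monotone_comp_symmDiff {n : ℕ} {F : Fin n → Finset (Fin m) → ℝ}
    (hF : Aligned F) : ∃ D : Finset (Fin m), ∀ l, Monotone fun S ↦ F l (S ∆ D) := by
  classical
  refine ⟨univ.filter fun h ↦ ∀ l, DecreasingAt (F l) h, fun l ↦ monotone_comp_symmDiff ?_ ?_⟩
  · exact fun h hh ↦ (mem_filter_univ h).1 hh l
  · exact fun h hh ↦ (hF h).resolve_right (fun hdec ↦ hh ((mem_filter_univ h).2 hdec)) l

end Bernoulli

/-- The `n`-function generalization of the Harris inequality: for an aligned tuple of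
nonnegative functions, the expectation of the product dominates the product of the
expectations. -/
theorem harris_aligned_tuple {m n : ℕ} (p : Fin m → ℝ) (hp : ∀ h, 0 ≤ p h ∧ p h ≤ 1)
    (F : Fin n → Finset (Fin m) → ℝ)
    (hFnonneg : ∀ l S, 0 ≤ F l S) (hFaligned : Aligned F) :
    ∏ l, bernExp p (F l) ≤ bernExp p (fun S => ∏ l, F l S) := by
  obtain ⟨D, hD⟩ := hFaligned.exists_monotone_comp_symmDiff
  have hq (h : Fin m) : 0 ≤ D.piecewise (1 - p) p h ∧ D.piecewise (1 - p) p h ≤ 1 := by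
    by_cases hh : h ∈ D <;> simp [hh, hp h]
  calc ∏ l, bernExp p (F l)
      = ∏ l, bernExp (D.piecewise (1 - p) p) (fun S ↦ F l (S ∆ D)) := by
        simp only [bernExp_comp_symmDiff]
    _ ≤ bernExp (D.piecewise (1 - p) p) (fun S ↦ ∏ l, F l (S ∆ D)) :=
        prod_bernExp_le_of_monotone hq univ (fun l _ S ↦ hFnonneg l (S ∆ D)) fun l _ ↦ hD l
    _ = bernExp p (fun S ↦ ∏ l, F l S) := bernExp_comp_symmDiff p (fun S ↦ ∏ l, F l S) D
end

section
/- In the two-party parliamentary model, the parliamentary win-probability function g is increasing at every voter h ∈ A and decreasing at every voter h ∉ A; that is, for every S ⊆ H, g(S ∪ {h}) ≥ g(S) if h ∈ A and g(S ∪ {h}) ≤ g(S) if h ∉ A. -/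
open Finset

/-- Presidential win-probability for party `a` (with supporter set `A`) given
turnout `S`: win on a strict majority of cast votes, ties broken by a fair coin. -/
noncomputable def presWin {m : ℕ} (A : Finset (Fin m)) (S : Finset (Fin m)) : ℝ :=
  if (S \ A).card < (S ∩ A).card then 1
  else if (S ∩ A).card = (S \ A).card then 1 / 2 else 0

/-- Probability that party `a` is awarded district `D` given turnout `S`. -/
noncomputable def distWin {m : ℕ} (A D S : Finset (Fin m)) : ℝ :=
  if ((S ∩ D) \ A).card < (S ∩ A ∩ D).card then 1
  else if (S ∩ A ∩ D).card = ((S ∩ D) \ A).card then 1 / 2 else 0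

/-- Probability of winning parliament given `w` districts out of `k`:  a strict
majority of the districts wins, an exact tie is broken by a fair coin. -/
noncomputable def majOf (k w : ℕ) : ℝ :=
  if k < 2 * w then 1 else if 2 * w = k then 1 / 2 else 0

/-- Parliamentary win-probability for party `a` (supporter set `A`, districts `D`)
given turnout `S`: each district is awarded independently with probability
`distWin A (D j) S`, and party `a` wins parliament on a majority of districts. -/
noncomputable def parlWin {m k : ℕ} (A : Finset (Fin m)) (D : Fin k → Finset (Fin m))
    (S : Finset (Fin m)) : ℝ :=
  ∑ W : Finset (Fin k),
    (∏ j ∈ W, distWin A (D j) S) * (∏ j ∈ Wᶜ, (1 - distWin A (D j) S)) * majOf k W.card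

/-!
Conditioning on whether `a` is chosen shows that the expectation of a function of a random subset
is affine in the probability `u a` of choosing `a`, with slope the expected effect of adding `a`.
For a monotone function every slope is nonnegative, so the expectation increases with each `u a`.
The parliamentary win probability is such an expectation: majority rule is monotone in the set of
districts won, and a vote for a party cannot lower its probability of being awarded a district.
-/

section RandomSubset

variable {ι R : Type*} [DecidableEq ι] [CommRing R]

/-- The expectation of `f W`, where `W` is the random subset of `s` that contains each `i ∈ s`
independently with probability `u i`. -/
def randomSubsetExpect (s : Finset ι) (u : ι → R) (f : Finset ι → R) : R :=
  ∑ W ∈ s.powerset, (∏ i ∈ W, u i) * (∏ i ∈ s \ W, (1 - u i)) * f W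

theorem randomSubsetExpect_insert {a : ι} {s : Finset ι} (ha : a ∉ s) (u : ι → R)
    (f : Finset ι → R) :
    randomSubsetExpect (insert a s) u f =
      (1 - u a) * randomSubsetExpect s u f +
        u a * randomSubsetExpect s u (fun W => f (insert a W)) := by
  unfold randomSubsetExpect
  rw [sum_powerset_insert ha, mul_sum, mul_sum]
  congr 1 <;> refine sum_congr rfl fun W hW => ?_
  all_goals have haW : a ∉ W := fun h => ha (mem_powerset.1 hW h)
  · have haW' : a ∉ s \ W := fun h => ha (mem_sdiff.1 h).1
    rw [insert_sdiff_of_notMem s haW, prod_insert haW']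
    ring
  · rw [insert_sdiff_insert, sdiff_insert_of_notMem ha, prod_insert haW]
    ring

variable [PartialOrder R] [IsOrderedRing R] {s : Finset ι} {u v : ι → R} {f g : Finset ι → R}

theorem randomSubsetExpect_mono (hu₀ : ∀ i ∈ s, 0 ≤ u i) (hu₁ : ∀ i ∈ s, u i ≤ 1)
    (hfg : ∀ W ⊆ s, f W ≤ g W) : randomSubsetExpect s u f ≤ randomSubsetExpect s u g := by
  refine sum_le_sum fun W hW => ?_
  have hWs : W ⊆ s := mem_powerset.1 hW
  refine mul_le_mul_of_nonneg_left (hfg W hWs) (mul_nonneg ?_ ?_)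
  · exact prod_nonneg fun i hi => hu₀ i (hWs hi)
  · exact prod_nonneg fun i hi => sub_nonneg.2 (hu₁ i (mem_sdiff.1 hi).1)

theorem randomSubsetExpect_le_of_monotone (hf : Monotone f) (hu : ∀ i ∈ s, 0 ≤ u i)
    (huv : ∀ i ∈ s, u i ≤ v i) (hv : ∀ i ∈ s, v i ≤ 1) :
    randomSubsetExpect s u f ≤ randomSubsetExpect s v f := by
  induction s using Finset.induction_on generalizing f with
  | empty => simp [randomSubsetExpect]
  | insert a s ha ih =>
    rw [forall_mem_insert] at hu huv hv
    obtain ⟨hua, hu⟩ := hu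
    obtain ⟨huva, huv⟩ := huv
    obtain ⟨hva, hv⟩ := hv
    let f' : Finset ι → R := fun W => f (insert a W)
    have hf' : Monotone f' := fun W X hWX => hf (insert_subset_insert a hWX)
    have hslope : randomSubsetExpect s v f ≤ randomSubsetExpect s v f' :=
      randomSubsetExpect_mono (fun i hi => (hu i hi).trans (huv i hi)) hv
        fun W _ => hf (subset_insert a W)
    have hua' : 0 ≤ 1 - u a := sub_nonneg.2 (huva.trans hva)
    calc
      randomSubsetExpect (insert a s) u f
      _ = (1 - u a) * randomSubsetExpect s u f + u a * randomSubsetExpect s u f' :=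
        randomSubsetExpect_insert ha u f
      _ ≤ (1 - u a) * randomSubsetExpect s v f + u a * randomSubsetExpect s v f' := by
        gcongr
        exacts [ih hf hu huv hv, ih hf' hu huv hv]
      _ ≤ (1 - v a) * randomSubsetExpect s v f + v a * randomSubsetExpect s v f' := by
        linear_combination mul_nonneg (sub_nonneg.2 huva) (sub_nonneg.2 hslope)
      _ = randomSubsetExpect (insert a s) v f := (randomSubsetExpect_insert ha v f).symm

end RandomSubset

section Contest

variable {α : Type*} [LinearOrder α]

/-- The probability that a score `x` beats a score `y`, ties being broken by a fair coin. Both the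
award of a district (`distWin`) and of parliament (`majOf`) are instances, definitionally. -/
noncomputable def contestWin (x y : α) : ℝ :=
  if y < x then 1 else if x = y then 1 / 2 else 0

theorem contestWin_nonneg (x y : α) : 0 ≤ contestWin x y := by
  unfold contestWin
  split_ifs <;> norm_num

theorem contestWin_le_one (x y : α) : contestWin x y ≤ 1 := by
  unfold contestWin
  split_ifs <;> norm_num

theorem contestWin_le_contestWin {x x' y y' : α} (hx : x ≤ x') (hy : y' ≤ y) :
    contestWin x y ≤ contestWin x' y' := by
  unfold contestWin
  split_ifs <;> first | order | norm_num

end Contest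

theorem majOf_monotone (k : ℕ) : Monotone (majOf k) := fun _ _ hwx =>
  contestWin_le_contestWin (Nat.mul_le_mul_left 2 hwx) le_rfl

section Turnout

variable {m k : ℕ} {A S T : Finset (Fin m)}

theorem distWin_nonneg (A D S : Finset (Fin m)) : 0 ≤ distWin A D S :=
  contestWin_nonneg _ _

theorem distWin_le_one (A D S : Finset (Fin m)) : distWin A D S ≤ 1 :=
  contestWin_le_one _ _

theorem distWin_le_distWin (D : Finset (Fin m)) (hA : S ∩ A ⊆ T) (hB : T \ A ⊆ S) :
    distWin A D S ≤ distWin A D T := by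
  have hsupporters : S ∩ A ∩ D ⊆ T ∩ A ∩ D :=
    inter_subset_inter_right (subset_inter hA inter_subset_right)
  have hopponents : (T ∩ D) \ A ⊆ (S ∩ D) \ A := by
    rw [← sdiff_inter_right_comm, ← sdiff_inter_right_comm]
    exact inter_subset_inter_right (subset_sdiff.2 ⟨hB, sdiff_disjoint⟩)
  exact contestWin_le_contestWin (card_le_card hsupporters) (card_le_card hopponents)

theorem parlWin_eq_randomSubsetExpect (A : Finset (Fin m)) (D : Fin k → Finset (Fin m))
    (S : Finset (Fin m)) :
    parlWin A D S =
      randomSubsetExpect univ (fun j => distWin A (D j) S) fun W => majOf k #W := by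
  simp only [parlWin, randomSubsetExpect, powerset_univ, compl_eq_univ_sdiff]

theorem parlWin_monotone_general (D : Fin k → Finset (Fin m)) (hA : S ∩ A ⊆ T)
    (hB : T \ A ⊆ S) : parlWin A D S ≤ parlWin A D T := by
  rw [parlWin_eq_randomSubsetExpect, parlWin_eq_randomSubsetExpect]
  exact randomSubsetExpect_le_of_monotone ((majOf_monotone k).comp card_mono)
    (fun j _ => distWin_nonneg A (D j) S) (fun j _ => distWin_le_distWin (D j) hA hB)
    fun j _ => distWin_le_one A (D j) T

end Turnout

/-- The parliamentary win-probability function is increasing at every supporter of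
party `a` and decreasing at every supporter of the rival party. -/
theorem parlWin_monotone {m k : ℕ} (A : Finset (Fin m))
    (D : Fin k → Finset (Fin m)) (hD : ∀ h : Fin m, ∃! j, h ∈ D j)
    (h : Fin m) (S : Finset (Fin m)) :
    (h ∈ A → parlWin A D S ≤ parlWin A D (insert h S)) ∧
    (h ∉ A → parlWin A D (insert h S) ≤ parlWin A D S) := by
  exact ⟨fun hh => parlWin_monotone_general D (by grind) (by grind),
    fun hh => parlWin_monotone_general D (by grind) (by grind)⟩
end
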